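/- With y₁(a,b;c;z) = (Γ(a)Γ(b)/Γ(c)) ₂F₁(a,b;c;z) and y₂(a,b;c;z) = z^{1−c}(Γ(a−c+1)Γ(b−c+1)/Γ(2−c)) ₂F₁(a−c+1,b−c+1;2−c;z), the 'discrete Wronskian' ω(a,b;c;z) := y₁(a,b;c;z)·y₂(a+1,b;c+1;z) − y₁(a+1,b;c+1;z)·y₂(a,b;c;z) equals −(π sin(πc)/(sin(π(c−a)) sin(π(c−b)))) · (Γ(a)Γ(b)/(Γ(c−a)Γ(c−b+1))) · z^{−c}(1−z)^{c−a−b}, for 0 < z < 1 and generic parameters. -/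

import Mathlib

/-- Gauss hypergeometric series. -/
noncomputable def hypF (a b c z : ℂ) : ℂ :=
  ∑' k : ℕ, ((ascPochhammer ℂ k).eval a * (ascPochhammer ℂ k).eval b /
    ((ascPochhammer ℂ k).eval c * (Nat.factorial k : ℂ))) * z ^ k

/-- First rescaled Frobenius solution at 0. -/
noncomputable def y₁ (a b c z : ℂ) : ℂ :=
  Complex.Gamma a * Complex.Gamma b / Complex.Gamma c * hypF a b c z

/-- Second rescaled Frobenius solution at 0. -/
noncomputable def y₂ (a b c z : ℂ) : ℂ :=
  z ^ (1 - c) * (Complex.Gamma (a - c + 1) * Complex.Gamma (b - c + 1) /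
    Complex.Gamma (2 - c)) * hypF (a - c + 1) (b - c + 1) (2 - c) z

/-!
Write `F = ₂F₁(a, b; c)` and `F₁ = ₂F₁(a + 1, b; c + 1)`. The contiguous relations say that
`(F, F₁)` solves a linear first-order `2 × 2` system with coefficients rational in `z`. The second
Frobenius solution leads to the same system for the parameters `(b - c, a - c + 1; 1 - c)`, which
are the image of `(a, b; c)` under an involution. Up to Gamma factors and `z ^ (-c)`, the discrete
Wronskian is a bilinear expression `W` in the two solution pairs, and Liouville's argument gives
`(1 - z) W' = (a + b - c) W`. Hence `W = W(0) (1 - z) ^ (c - a - b)`. Euler's reflection formula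
turns the Gamma factors into the stated quotient of sines.
-/

open Complex (Gamma Gamma_add_one Gamma_mul_Gamma_one_sub Gamma_ne_zero)

section PowerSeries

variable {𝕜 F : Type*} [NontriviallyNormedField 𝕜] [NormedAddCommGroup F] [NormedSpace 𝕜 F]
  [CompleteSpace F] {f : 𝕜 → F} {p : FormalMultilinearSeries 𝕜 𝕜 F} {r : ENNReal} {x : 𝕜}

lemma hasSum_deriv_of_hasFPowerSeriesOnBall (h : HasFPowerSeriesOnBall f p 0 r)
    (hx : x ∈ Metric.eball 0 r) :
    HasSum (fun n : ℕ ↦ x ^ n • ((n : 𝕜) + 1) • p.coeff (n + 1)) (deriv f x) := by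
  have hderiv := (h.fderiv.hasSum hx).mapL (ContinuousLinearMap.apply 𝕜 F (1 : 𝕜))
  simpa [FormalMultilinearSeries.apply_eq_pow_smul_coeff, ← Nat.cast_smul_eq_nsmul 𝕜]
    using hderiv

lemma hasSum_smul_deriv_of_hasFPowerSeriesOnBall (h : HasFPowerSeriesOnBall f p 0 r)
    (hx : x ∈ Metric.eball 0 r) :
    HasSum (fun n : ℕ ↦ x ^ n • (n : 𝕜) • p.coeff n) (x • deriv f x) := by
  rw [← hasSum_nat_add_iff' 1]
  simpa [pow_succ', mul_smul] using
    (hasSum_deriv_of_hasFPowerSeriesOnBall h hx).const_smul x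

end PowerSeries

section Coefficients

lemma ascPochhammer_succ_eval_left {S : Type*} [CommSemiring S] (a : S) (k : ℕ) :
    (ascPochhammer S (k + 1)).eval a = a * (ascPochhammer S k).eval (a + 1) := by
  simp [ascPochhammer_succ_left]

variable {𝕂 : Type*} [Field 𝕂] [CharZero 𝕂] {c : 𝕂}

lemma ordinaryHypergeometricCoefficient_succ (a b : 𝕂) {k : ℕ} (hck : c + k ≠ 0) :
    (k + 1) * (c + k) * ordinaryHypergeometricCoefficient a b c (k + 1) =
      (a + k) * (b + k) * ordinaryHypergeometricCoefficient a b c k := by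
  have hk : (k : 𝕂) + 1 ≠ 0 := Nat.cast_add_one_ne_zero k
  simp only [ordinaryHypergeometricCoefficient, ascPochhammer_succ_eval, Nat.factorial_succ,
    Nat.cast_mul, Nat.cast_succ, mul_inv]
  field_simp

lemma ordinaryHypergeometricCoefficient_succ_eq_shift (a b : 𝕂) (hc : c ≠ 0) (k : ℕ) :
    c * ((k + 1) * ordinaryHypergeometricCoefficient a b c (k + 1)) =
      a * ((b + k) * ordinaryHypergeometricCoefficient (a + 1) b (c + 1) k) := by
  have hk : (k : 𝕂) + 1 ≠ 0 := Nat.cast_add_one_ne_zero k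
  simp only [ordinaryHypergeometricCoefficient, ascPochhammer_succ_eval_left a,
    ascPochhammer_succ_eval_left c, ascPochhammer_succ_eval k b, Nat.factorial_succ,
    Nat.cast_mul, Nat.cast_succ, mul_inv]
  field_simp

lemma ordinaryHypergeometricCoefficient_shift_succ (a b : 𝕂) (hc : c ≠ 0) {k : ℕ}
    (hck : c + 1 + k ≠ 0) :
    (c + 1 + k) * ordinaryHypergeometricCoefficient (a + 1) b (c + 1) (k + 1) =
      c * ordinaryHypergeometricCoefficient a b c (k + 1) +
        (b + k) * ordinaryHypergeometricCoefficient (a + 1) b (c + 1) k := by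
  refine mul_left_cancel₀ (Nat.cast_add_one_ne_zero k : (k : 𝕂) + 1 ≠ 0) ?_
  linear_combination ordinaryHypergeometricCoefficient_succ (a + 1) b hck -
    ordinaryHypergeometricCoefficient_succ_eq_shift a b hc k

end Coefficients

section Hypergeometric

lemma mem_eball_zero_one {E : Type*} [SeminormedAddGroup E] {x : E} (hx : ‖x‖ < 1) :
    x ∈ Metric.eball 0 1 := by
  simpa [← ENNReal.ofReal_one, Metric.eball_ofReal] using hx

variable {𝕂 : Type*} [RCLike 𝕂] {a b c x : 𝕂}

lemma ordinaryHypergeometric_symm (a b c : 𝕂) : (₂F₁ a b c : 𝕂 → 𝕂) = ₂F₁ b a c := by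
  ext x
  rw [ordinaryHypergeometric, ordinaryHypergeometric, ordinaryHypergeometricSeries_symm]

lemma one_le_radius_ordinaryHypergeometricSeries (a b c : 𝕂) :
    1 ≤ (ordinaryHypergeometricSeries 𝕂 a b c).radius := by
  by_cases h : ∀ k : ℕ, (k : 𝕂) ≠ -a ∧ (k : 𝕂) ≠ -b ∧ (k : 𝕂) ≠ -c
  · exact (ordinaryHypergeometricSeries_radius_eq_one 𝕂 a b c h).ge
  · obtain ⟨k, hk⟩ := not_forall.mp h
    have hpoly : a = -k ∨ b = -k ∨ c = -k := by grind
    obtain rfl | rfl | rfl := hpoly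
    · simp [ordinaryHypergeometric_radius_top_of_neg_nat₁]
    · simp [ordinaryHypergeometric_radius_top_of_neg_nat₂]
    · simp [ordinaryHypergeometric_radius_top_of_neg_nat₃]

lemma hasFPowerSeriesOnBall_ordinaryHypergeometric (a b c : 𝕂) :
    HasFPowerSeriesOnBall (₂F₁ a b c) (ordinaryHypergeometricSeries 𝕂 a b c) 0 1 :=
  have hradius := one_le_radius_ordinaryHypergeometricSeries a b c
  ((ordinaryHypergeometricSeries 𝕂 a b c).hasFPowerSeriesOnBall
    (one_pos.trans_le hradius)).mono one_pos hradius

lemma differentiableAt_ordinaryHypergeometric (a b c : 𝕂) (hx : ‖x‖ < 1) :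
    DifferentiableAt 𝕂 (₂F₁ a b c) x :=
  ((hasFPowerSeriesOnBall_ordinaryHypergeometric a b c).analyticAt_of_mem
    (mem_eball_zero_one hx)).differentiableAt

lemma hasSum_ordinaryHypergeometric (a b c : 𝕂) (hx : ‖x‖ < 1) :
    HasSum (fun k : ℕ ↦ x ^ k * ordinaryHypergeometricCoefficient a b c k) (₂F₁ a b c x) := by
  simpa [ordinaryHypergeometricSeries, FormalMultilinearSeries.apply_eq_pow_smul_coeff] using
    (hasFPowerSeriesOnBall_ordinaryHypergeometric a b c).hasSum (mem_eball_zero_one hx)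

lemma hasSum_deriv_ordinaryHypergeometric (a b c : 𝕂) (hx : ‖x‖ < 1) :
    HasSum (fun k : ℕ ↦ x ^ k * ((k + 1) * ordinaryHypergeometricCoefficient a b c (k + 1)))
      (deriv (₂F₁ a b c) x) := by
  simpa [ordinaryHypergeometricSeries] using hasSum_deriv_of_hasFPowerSeriesOnBall
    (hasFPowerSeriesOnBall_ordinaryHypergeometric a b c) (mem_eball_zero_one hx)

lemma hasSum_mul_deriv_ordinaryHypergeometric (a b c : 𝕂) (hx : ‖x‖ < 1) :
    HasSum (fun k : ℕ ↦ x ^ k * (k * ordinaryHypergeometricCoefficient a b c k))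
      (x * deriv (₂F₁ a b c) x) := by
  simpa [ordinaryHypergeometricSeries] using hasSum_smul_deriv_of_hasFPowerSeriesOnBall
    (hasFPowerSeriesOnBall_ordinaryHypergeometric a b c) (mem_eball_zero_one hx)

lemma hasSum_mul_deriv_add_ordinaryHypergeometric (a b c s : 𝕂) (hx : ‖x‖ < 1) :
    HasSum (fun k : ℕ ↦ x ^ k * ((s + k) * ordinaryHypergeometricCoefficient a b c k))
      (x * deriv (₂F₁ a b c) x + s * ₂F₁ a b c x) := by
  convert! (hasSum_mul_deriv_ordinaryHypergeometric a b c hx).add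
    ((hasSum_ordinaryHypergeometric a b c hx).mul_left s) using 2
  ring

lemma deriv_ordinaryHypergeometric_eq_shift (a b : 𝕂) (hc : c ≠ 0) (hx : ‖x‖ < 1) :
    c * deriv (₂F₁ a b c) x =
      a * (x * deriv (₂F₁ (a + 1) b (c + 1)) x + b * ₂F₁ (a + 1) b (c + 1) x) := by
  refine ((hasSum_deriv_ordinaryHypergeometric a b c hx).mul_left c).unique ?_
  convert! (hasSum_mul_deriv_add_ordinaryHypergeometric (a + 1) b (c + 1) b hx).mul_left a using 2
    with k
  linear_combination x ^ k * ordinaryHypergeometricCoefficient_succ_eq_shift a b hc k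

lemma mul_one_sub_mul_deriv_ordinaryHypergeometric_shift (a b : 𝕂) (hc : ∀ k : ℕ, c ≠ -k)
    (hx : ‖x‖ < 1) :
    x * (1 - x) * deriv (₂F₁ (a + 1) b (c + 1)) x =
      c * ₂F₁ a b c x - (c - b * x) * ₂F₁ (a + 1) b (c + 1) x := by
  have hleft := hasSum_mul_deriv_add_ordinaryHypergeometric (a + 1) b (c + 1) c hx
  have hright := (hasSum_ordinaryHypergeometric a b c hx).mul_left c
  have htail := (hasSum_mul_deriv_add_ordinaryHypergeometric (a + 1) b (c + 1) b hx).mul_left x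
  have hdiff := (hasSum_nat_add_iff' 1).mpr (hleft.sub hright)
  have hcoeff (k : ℕ) := ordinaryHypergeometricCoefficient_shift_succ a b (k := k)
    (by simpa using hc 0) (by have := hc (k + 1); push_cast at this; grind)
  have huniq := hdiff.unique (htail.congr_fun fun k ↦ by
    push_cast
    linear_combination x ^ (k + 1) * hcoeff k)
  simp only [Finset.sum_range_one, pow_zero, one_mul, Nat.cast_zero, add_zero, ascPochhammer_zero,
    Polynomial.eval_one, ordinaryHypergeometricCoefficient, sub_self, sub_zero] at huniq
  linear_combination huniq

lemma one_sub_mul_deriv_ordinaryHypergeometric (a b : 𝕂) (hc : ∀ k : ℕ, c ≠ -k) (hx : ‖x‖ < 1) :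
    c * ((1 - x) * deriv (₂F₁ a b c) x) =
      a * (c * ₂F₁ a b c x - (c - b) * ₂F₁ (a + 1) b (c + 1) x) := by
  linear_combination
    (1 - x) * deriv_ordinaryHypergeometric_eq_shift a b (by simpa using hc 0) hx +
      a * mul_one_sub_mul_deriv_ordinaryHypergeometric_shift a b hc hx

/-- The discrete Wronskian of `y₁` and `y₂` without its Gamma factors and its power of `x`, times
`c * (1 - c)`. The parameters in the second factor of each product are the image
`(b - c, a - c + 1; 1 - c)` of `(a, b; c)` under an involution and their shift. -/
noncomputable def reducedWronskian (a b c x : 𝕂) : 𝕂 :=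
  c * (1 - c) * (₂F₁ a b c x * ₂F₁ (b - c) (a - c + 1) (1 - c) x) -
    a * (b - c) * (x * (₂F₁ (a + 1) b (c + 1) x * ₂F₁ (b - c + 1) (a - c + 1) (1 - c + 1) x))

lemma reducedWronskian_zero (a b c : 𝕂) : reducedWronskian a b c 0 = c * (1 - c) := by
  simp [reducedWronskian]

lemma differentiableAt_reducedWronskian (a b c : 𝕂) (hx : ‖x‖ < 1) :
    DifferentiableAt 𝕂 (reducedWronskian a b c) x := by
  have hF (a b c : 𝕂) := differentiableAt_ordinaryHypergeometric a b c hx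
  unfold reducedWronskian
  fun_prop (disch := simp [hF])

lemma one_sub_mul_deriv_reducedWronskian (a b : 𝕂) (hc : ∀ m : ℤ, c ≠ m) (hx : ‖x‖ < 1) :
    (1 - x) * deriv (reducedWronskian a b c) x = -((c - a - b) * reducedWronskian a b c x) := by
  have hc₁ (k : ℕ) : c ≠ -k := by exact_mod_cast hc (-k)
  have hc₂ (k : ℕ) : 1 - c ≠ -k := by have := hc (k + 1); push_cast at this; grind
  have hF (a b c : 𝕂) := (differentiableAt_ordinaryHypergeometric a b c hx).hasDerivAt
  have hW := ((((hF a b c).mul (hF (b - c) (a - c + 1) (1 - c))).const_mul (c * (1 - c))).sub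
    (((hasDerivAt_id x).mul ((hF (a + 1) b (c + 1)).mul
      (hF (b - c + 1) (a - c + 1) (1 - c + 1)))).const_mul (a * (b - c)))).deriv
  have hF' := one_sub_mul_deriv_ordinaryHypergeometric a b hc₁ hx
  have hF₁' := mul_one_sub_mul_deriv_ordinaryHypergeometric_shift a b hc₁ hx
  have hG' := one_sub_mul_deriv_ordinaryHypergeometric (b - c) (a - c + 1) hc₂ hx
  have hG₁' := mul_one_sub_mul_deriv_ordinaryHypergeometric_shift (b - c) (a - c + 1) hc₂ hx
  change deriv (reducedWronskian a b c) x = _ at hW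
  simp only [hW, reducedWronskian, id, Pi.mul_apply]
  linear_combination (1 - c) * ₂F₁ (b - c) (a - c + 1) (1 - c) x * hF' + c * ₂F₁ a b c x * hG' -
    a * (b - c) * ₂F₁ (b - c + 1) (a - c + 1) (1 - c + 1) x * hF₁' -
    a * (b - c) * ₂F₁ (a + 1) b (c + 1) x * hG₁'

end Hypergeometric

lemma one_sub_mem_slitPlane {z : ℂ} (hz : ‖z‖ < 1) : 1 - z ∈ Complex.slitPlane := by
  simpa [sub_eq_add_neg] using Complex.mem_slitPlane_of_norm_lt_one (z := -z) (by simpa using hz)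

lemma eq_mul_one_sub_cpow_of_one_sub_mul_deriv {f : ℂ → ℂ} {s : ℂ}
    (hf : DifferentiableOn ℂ f (Metric.ball 0 1))
    (hode : ∀ z ∈ Metric.ball (0 : ℂ) 1, (1 - z) * deriv f z = -(s * f z)) {z : ℂ}
    (hz : z ∈ Metric.ball 0 1) : f z = f 0 * (1 - z) ^ s := by
  have hderiv (x : ℂ) (hx : x ∈ Metric.ball 0 1) :
      HasDerivAt (fun y ↦ f y * (1 - y) ^ (-s)) 0 x := by
    have hslit := one_sub_mem_slitPlane (mem_ball_zero_iff.mp hx)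
    have hne := Complex.slitPlane_ne_zero hslit
    convert! (hf.hasDerivAt (Metric.isOpen_ball.mem_nhds hx)).mul
      (((hasDerivAt_id x).const_sub 1).cpow_const (c := -s) hslit) using 1
    simp only [id, Complex.cpow_sub _ _ hne, Complex.cpow_one]
    field_simp
    linear_combination -(1 - x) ^ (-s) * hode x hx
  have hconst : f z * (1 - z) ^ (-s) = f 0 := by
    simpa using Metric.isOpen_ball.is_const_of_deriv_eq_zero
      (convex_ball (0 : ℂ) 1).isPreconnected
      (fun x hx ↦ (hderiv x hx).differentiableAt.differentiableWithinAt)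
      (fun x hx ↦ (hderiv x hx).deriv) hz (Metric.mem_ball_self one_pos)
  have hne := Complex.slitPlane_ne_zero (one_sub_mem_slitPlane (mem_ball_zero_iff.mp hz))
  rw [← hconst, mul_assoc, ← Complex.cpow_add _ _ hne, neg_add_cancel, Complex.cpow_zero, mul_one]

lemma reducedWronskian_eq (a b : ℂ) {c z : ℂ} (hc : ∀ m : ℤ, c ≠ m) (hz : ‖z‖ < 1) :
    reducedWronskian a b c z = c * (1 - c) * (1 - z) ^ (c - a - b) := by
  rw [← reducedWronskian_zero a b c]
  refine eq_mul_one_sub_cpow_of_one_sub_mul_deriv (fun x hx ↦ ?_) (fun x hx ↦ ?_)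
    (mem_ball_zero_iff.mpr hz)
  · exact (differentiableAt_reducedWronskian a b c
      (mem_ball_zero_iff.mp hx)).differentiableWithinAt
  · exact one_sub_mul_deriv_reducedWronskian a b hc (mem_ball_zero_iff.mp hx)

lemma hypF_eq_ordinaryHypergeometric (a b c z : ℂ) : hypF a b c z = ₂F₁ a b c z := by
  rw [hypF, ordinaryHypergeometric_eq_tsum]
  refine tsum_congr fun k ↦ ?_
  rw [smul_eq_mul, div_eq_mul_inv, mul_inv]
  ring

/-- The paper's `ω(a, b; c; z)`: the Casoratian of the two Frobenius solutions along the shift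
`(a, b; c) ↦ (a + 1, b; c + 1)`. -/
noncomputable def discreteWronskian (a b c z : ℂ) : ℂ :=
  y₁ a b c z * y₂ (a + 1) b (c + 1) z - y₁ (a + 1) b (c + 1) z * y₂ a b c z

lemma discreteWronskian_eq_mul_reducedWronskian {a b c z : ℂ} (ha : a ≠ 0) (hbc : b ≠ c)
    (hc₀ : c ≠ 0) (hc₁ : c ≠ 1) (hz : z ≠ 0) :
    discreteWronskian a b c z =
      Gamma a * Gamma b * (Gamma (a - c + 1) * Gamma (b - c) / (Gamma c * Gamma (1 - c))) *
        z ^ (-c) * (reducedWronskian a b c z / (c * (1 - c))) := by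
  have hbc' : b - c ≠ 0 := sub_ne_zero.mpr hbc
  have hc₁' : 1 - c ≠ 0 := sub_ne_zero.mpr hc₁.symm
  have hpow : z ^ (1 - c) = z * z ^ (-c) := by
    rw [sub_eq_add_neg, Complex.cpow_add _ _ hz, Complex.cpow_one]
  rw [discreteWronskian, y₁, y₁, y₂, y₂, reducedWronskian, hpow,
    show a + 1 - (c + 1) + 1 = a - c + 1 by ring, show b - (c + 1) + 1 = b - c by ring,
    show 2 - (c + 1) = 1 - c by ring, show 1 - (c + 1) = -c by ring,
    show 2 - c = 1 - c + 1 by ring, Gamma_add_one a ha, Gamma_add_one c hc₀,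
    Gamma_add_one (1 - c) hc₁', Gamma_add_one (b - c) hbc']
  simp only [hypF_eq_ordinaryHypergeometric, ordinaryHypergeometric_symm (a - c + 1)]
  field_simp

lemma discreteWronskian_eq {a b c z : ℂ} (ha : a ≠ 0) (hbc : b ≠ c) (hc : ∀ m : ℤ, c ≠ m)
    (hz₀ : z ≠ 0) (hz₁ : ‖z‖ < 1) :
    discreteWronskian a b c z =
      Gamma a * Gamma b * (Gamma (a - c + 1) * Gamma (b - c) / (Gamma c * Gamma (1 - c))) *
        z ^ (-c) * (1 - z) ^ (c - a - b) := by
  have hc₀ : c ≠ 0 := by exact_mod_cast hc 0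
  have hc₁ : c ≠ 1 := by exact_mod_cast hc 1
  rw [discreteWronskian_eq_mul_reducedWronskian ha hbc hc₀ hc₁ hz₀, reducedWronskian_eq a b hc hz₁,
    mul_div_cancel_left₀ _ (mul_ne_zero hc₀ (sub_ne_zero.mpr hc₁.symm))]

lemma Gamma_ne_zero_of_ne_nonpos_int {s : ℂ} (hs : ∀ m : ℤ, m ≤ 0 → s ≠ m) : Gamma s ≠ 0 :=
  Gamma_ne_zero fun m ↦ by exact_mod_cast hs (-m) (by simp)

lemma Gamma_mul_div_Gamma_mul_eq_sin {a b c : ℂ} (hca : Gamma (c - a) ≠ 0)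
    (hcb : Gamma (c - b + 1) ≠ 0) :
    Gamma (a - c + 1) * Gamma (b - c) / (Gamma c * Gamma (1 - c)) =
      -(Real.pi * Complex.sin (Real.pi * c) /
          (Complex.sin (Real.pi * (c - a)) * Complex.sin (Real.pi * (c - b))) /
        (Gamma (c - a) * Gamma (c - b + 1))) := by
  have hpi : (Real.pi : ℂ) ≠ 0 := Complex.ofReal_ne_zero.mpr Real.pi_ne_zero
  have hΓa : Gamma (a - c + 1) = Real.pi / Complex.sin (Real.pi * (c - a)) / Gamma (c - a) := by
    rw [← Gamma_mul_Gamma_one_sub, mul_div_cancel_left₀ _ hca, show 1 - (c - a) = a - c + 1 by ring]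
  have hΓb : Gamma (b - c) =
      -(Real.pi / Complex.sin (Real.pi * (c - b)) / Gamma (c - b + 1)) := by
    rw [show Real.pi * (c - b) = -(Real.pi * (b - c)) by ring, Complex.sin_neg, div_neg, neg_div,
      neg_neg, ← Gamma_mul_Gamma_one_sub, show 1 - (b - c) = c - b + 1 by ring,
      mul_div_cancel_right₀ _ hcb]
  rw [hΓa, hΓb, Gamma_mul_Gamma_one_sub]
  field_simp

theorem discrete_wronskian_formula_general (a b c : ℂ) (hcZ : ∀ m : ℤ, c ≠ (m : ℂ))
    (ha : ∀ m : ℤ, m ≤ 0 → a ≠ (m : ℂ)) (_hb : ∀ m : ℤ, m ≤ 0 → b ≠ (m : ℂ))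
    (hca : ∀ m : ℤ, m ≤ 0 → c - a ≠ (m : ℂ)) (hcb : ∀ m : ℤ, m ≤ 0 → c - b ≠ (m : ℂ))
    (z : ℂ) (hz0 : z ≠ 0) (hz1 : ‖z‖ < 1) :
    discreteWronskian a b c z =
      -((Real.pi * Complex.sin (Real.pi * c) /
          (Complex.sin (Real.pi * (c - a)) * Complex.sin (Real.pi * (c - b)))) *
        (Gamma a * Gamma b / (Gamma (c - a) * Gamma (c - b + 1))) *
        z ^ (-c) * (1 - z) ^ (c - a - b)) := by
  have ha0 : a ≠ 0 := by exact_mod_cast ha 0 le_rfl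
  have hcb0 : c - b ≠ 0 := by exact_mod_cast hcb 0 le_rfl
  have hΓca : Gamma (c - a) ≠ 0 := Gamma_ne_zero_of_ne_nonpos_int hca
  have hΓcb : Gamma (c - b + 1) ≠ 0 := by
    rw [Gamma_add_one _ hcb0]
    exact mul_ne_zero hcb0 (Gamma_ne_zero_of_ne_nonpos_int hcb)
  rw [discreteWronskian_eq ha0 (sub_ne_zero.mp hcb0).symm hcZ hz0 hz1,
    Gamma_mul_div_Gamma_mul_eq_sin hΓca hΓcb]
  ring

theorem discrete_wronskian_formula (a b c : ℂ)
    (hcZ : ∀ m : ℤ, c ≠ (m : ℂ))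
    (ha : ∀ m : ℤ, m ≤ 0 → a ≠ (m : ℂ)) (hb : ∀ m : ℤ, m ≤ 0 → b ≠ (m : ℂ))
    (hca : ∀ m : ℤ, m ≤ 0 → c - a ≠ (m : ℂ)) (hcb : ∀ m : ℤ, m ≤ 0 → c - b ≠ (m : ℂ))
    (hcb1 : ∀ m : ℤ, m ≤ 0 → c - b + 1 ≠ (m : ℂ))
    (z : ℝ) (hz0 : 0 < z) (hz1 : z < 1) :
    y₁ a b c z * y₂ (a + 1) b (c + 1) z - y₁ (a + 1) b (c + 1) z * y₂ a b c z =
      -((↑Real.pi * Complex.sin (Real.pi * c) /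
          (Complex.sin (Real.pi * (c - a)) * Complex.sin (Real.pi * (c - b)))) *
        (Complex.Gamma a * Complex.Gamma b /
          (Complex.Gamma (c - a) * Complex.Gamma (c - b + 1))) *
        (z : ℂ) ^ (-c) * ((1 : ℂ) - z) ^ (c - a - b)) :=
  discrete_wronskian_formula_general a b c hcZ ha hb hca hcb z (Complex.ofReal_ne_zero.mpr hz0.ne')
    (by simpa [abs_of_pos hz0] using hz1)
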